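/- arXiv:1810.11749 — 2 statements merged into one kernel-verified Lean document; each statement's English description precedes it below -/
import Mathlib

section
/- Let 𝓐 : ℝ^{N₁×N₂} → ℝ^m be a linear map and let k be a positive integer with k ≤ min{N₁, N₂}. Suppose α > 0 satisfies α·‖Z‖_F ≤ ‖𝓐(Z)‖₁ for all Z ∈ ℝ^{N₁×N₂} with rank(Z) ≤ k. Let Z ∈ ℝ^{N₁×N₂} be a nonzero matrix with rank(Z) ≤ k, and let H be a best rank-k approximation of 𝓐*(sgn(𝓐(Z))). Then ‖H‖_F ≥ α. -/
noncomputable def frobNorm {N₁ N₂ : ℕ} (Z : Matrix (Fin N₁) (Fin N₂) ℝ) : ℝ :=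
  Real.sqrt (∑ i, ∑ j, (Z i j) ^ 2)

def frobInner {N₁ N₂ : ℕ} (A B : Matrix (Fin N₁) (Fin N₂) ℝ) : ℝ :=
  ∑ i, ∑ j, A i j * B i j

def l1norm {m : ℕ} (v : Fin m → ℝ) : ℝ := ∑ i, |v i|

noncomputable def sgnVec {m : ℕ} (v : Fin m → ℝ) : Fin m → ℝ := fun i => Real.sign (v i)

def IsBestRankApprox {N₁ N₂ : ℕ} (k : ℕ) (Z H : Matrix (Fin N₁) (Fin N₂) ℝ) : Prop :=
  H.rank ≤ k ∧
    ∀ W : Matrix (Fin N₁) (Fin N₂) ℝ, W.rank ≤ k → frobNorm (Z - H) ≤ frobNorm (Z - W)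

/-!
The matrices of rank at most `k` form a cone: they are closed under positive scaling. If `h` is a
best approximation of `b` from a cone `K` in an inner product space, then minimality along the ray
through `h` makes `b - h` orthogonal to `h`, so `‖b - h‖² = ‖b‖² - ‖h‖²`. Comparing with the best
approximation of `b` on the ray through any other `z ∈ K` gives `⟪b, z⟫ ≤ ‖h‖ ‖z‖`. For
`b = 𝓐*(sgn 𝓐(Z))` and `z = Z` the inner product is `⟨sgn 𝓐(Z), 𝓐(Z)⟩ = ‖𝓐(Z)‖₁`.
-/

section BestApproxFromCone

open scoped RealInnerProductSpace

variable {E : Type*} [NormedAddCommGroup E] [InnerProductSpace ℝ E] {K : Set E} {b h z : E}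

theorem inner_sub_self_eq_zero_of_isMinOn_cone (hK : ∀ ⦃t : ℝ⦄, 0 < t → ∀ ⦃x⦄, x ∈ K → t • x ∈ K)
    (hh : h ∈ K) (hmin : IsMinOn (fun x => ‖b - x‖) K h) : ⟪b - h, h⟫ = 0 := by
  have hlocal : IsLocalMin (fun t : ℝ => ‖b - t • h‖ ^ 2) 1 := by
    filter_upwards [lt_mem_nhds one_pos] with t ht
    simpa only [one_smul] using pow_le_pow_left₀ (norm_nonneg _) (hmin (hK ht hh)) 2
  have hderiv : HasDerivAt (fun t : ℝ => ‖b - t • h‖ ^ 2) (2 * ⟪b - h, -h⟫) 1 := by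
    simpa only [one_smul, id] using (((hasDerivAt_id (1 : ℝ)).smul_const h).const_sub b).norm_sq
  simpa using hlocal.hasDerivAt_eq_zero hderiv

theorem norm_sub_sq_eq_of_isMinOn_cone (hK : ∀ ⦃t : ℝ⦄, 0 < t → ∀ ⦃x⦄, x ∈ K → t • x ∈ K)
    (hh : h ∈ K) (hmin : IsMinOn (fun x => ‖b - x‖) K h) : ‖b - h‖ ^ 2 = ‖b‖ ^ 2 - ‖h‖ ^ 2 := by
  have horth := inner_sub_self_eq_zero_of_isMinOn_cone hK hh hmin
  rw [inner_sub_left, real_inner_self_eq_norm_sq] at horth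
  rw [norm_sub_sq_real]
  linarith

theorem inner_le_norm_mul_norm_of_isMinOn_cone
    (hK : ∀ ⦃t : ℝ⦄, 0 < t → ∀ ⦃x⦄, x ∈ K → t • x ∈ K) (hh : h ∈ K)
    (hmin : IsMinOn (fun x => ‖b - x‖) K h) (hz : z ∈ K) : ⟪b, z⟫ ≤ ‖h‖ * ‖z‖ := by
  rcases le_or_gt ⟪b, z⟫ 0 with hnonpos | hpos
  · exact hnonpos.trans (by positivity)
  have hz_norm : 0 < ‖z‖ := norm_pos_iff.2 fun hz0 => by simp [hz0] at hpos
  -- `t • z` is the orthogonal projection of `b` onto the line through `z`.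
  set t : ℝ := ⟪b, z⟫ / ‖z‖ ^ 2
  have ht_mul : t * ‖z‖ ^ 2 = ⟪b, z⟫ := div_mul_cancel₀ _ (by positivity)
  have hcompare : ‖b - h‖ ^ 2 ≤ ‖b - t • z‖ ^ 2 :=
    pow_le_pow_left₀ (norm_nonneg _) (hmin (hK (by positivity) hz)) 2
  have hproj : ‖b - t • z‖ ^ 2 = ‖b‖ ^ 2 - t * ⟪b, z⟫ := by
    rw [norm_sub_sq_real, real_inner_smul_right, norm_smul, mul_pow, Real.norm_eq_abs, sq_abs]
    linear_combination t * ht_mul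
  have hbound : t * ⟪b, z⟫ ≤ ‖h‖ ^ 2 := by
    linarith [norm_sub_sq_eq_of_isMinOn_cone hK hh hmin]
  refine le_of_sq_le_sq ?_ (by positivity)
  calc ⟪b, z⟫ ^ 2 = t * ⟪b, z⟫ * ‖z‖ ^ 2 := by linear_combination -⟪b, z⟫ * ht_mul
    _ ≤ ‖h‖ ^ 2 * ‖z‖ ^ 2 := by gcongr
    _ = (‖h‖ * ‖z‖) ^ 2 := by ring

end BestApproxFromCone

section Frobenius

variable {N₁ N₂ : ℕ}

/-- The vectorization of a matrix, as an element of the Euclidean space indexed by its entries.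
It carries the Frobenius norm and inner product to the Euclidean ones. -/
def matrixToEuclidean {m n : Type*} : Matrix m n ℝ ≃ₗ[ℝ] EuclideanSpace ℝ (m × n) :=
  (Matrix.ofLinearEquiv ℝ).symm ≪≫ₗ (LinearEquiv.curry ℝ ℝ m n).symm ≪≫ₗ
    (WithLp.linearEquiv 2 ℝ (m × n → ℝ)).symm

theorem matrixToEuclidean_apply {m n : Type*} (Z : Matrix m n ℝ) (p : m × n) :
    matrixToEuclidean Z p = Z p.1 p.2 :=
  rfl

theorem norm_matrixToEuclidean (Z : Matrix (Fin N₁) (Fin N₂) ℝ) :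
    ‖matrixToEuclidean Z‖ = frobNorm Z := by
  simp only [EuclideanSpace.norm_eq, Real.norm_eq_abs, sq_abs, matrixToEuclidean_apply,
    Fintype.sum_prod_type, frobNorm]

theorem inner_matrixToEuclidean (Z W : Matrix (Fin N₁) (Fin N₂) ℝ) :
    inner ℝ (matrixToEuclidean Z) (matrixToEuclidean W) = frobInner Z W := by
  simp only [PiLp.inner_apply, Real.inner_apply, matrixToEuclidean_apply, Fintype.sum_prod_type,
    frobInner]

theorem frobNorm_pos {Z : Matrix (Fin N₁) (Fin N₂) ℝ} (hZ : Z ≠ 0) : 0 < frobNorm Z := by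
  rw [← norm_matrixToEuclidean]
  exact norm_pos_iff.2 (matrixToEuclidean.map_ne_zero_iff.2 hZ)

theorem IsBestRankApprox.frobInner_le_frobNorm_mul_frobNorm {k : ℕ}
    {B H Z : Matrix (Fin N₁) (Fin N₂) ℝ}
    (hH : IsBestRankApprox k B H) (hZ : Z.rank ≤ k) :
    frobInner B Z ≤ frobNorm H * frobNorm Z := by
  let K : Set (EuclideanSpace ℝ (Fin N₁ × Fin N₂)) := matrixToEuclidean '' {W | W.rank ≤ k}
  have hK : ∀ ⦃t : ℝ⦄, 0 < t → ∀ ⦃x⦄, x ∈ K → t • x ∈ K := by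
    rintro t ht _ ⟨W, hW, rfl⟩
    refine ⟨t • W, ?_, map_smul _ _ _⟩
    exact (W.rank_smul_of_mem_nonZeroDivisors (mem_nonZeroDivisors_of_ne_zero ht.ne')).trans_le hW
  have hmin : IsMinOn (fun x => ‖matrixToEuclidean B - x‖) K (matrixToEuclidean H) := by
    rintro _ ⟨W, hW, rfl⟩
    simpa only [Set.mem_ofPred_eq, ← map_sub, norm_matrixToEuclidean] using hH.2 W hW
  rw [← inner_matrixToEuclidean, ← norm_matrixToEuclidean, ← norm_matrixToEuclidean]
  exact inner_le_norm_mul_norm_of_isMinOn_cone hK ⟨H, hH.1, rfl⟩ hmin ⟨Z, hZ, rfl⟩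

end Frobenius

theorem sign_mul_self_eq_abs (r : ℝ) : Real.sign r * r = |r| := by
  rcases lt_trichotomy r 0 with hr | rfl | hr
  · rw [Real.sign_of_neg hr, abs_of_neg hr, neg_one_mul]
  · rw [mul_zero, abs_zero]
  · rw [Real.sign_of_pos hr, abs_of_pos hr, one_mul]

theorem sum_sgnVec_mul_self {m : ℕ} (v : Fin m → ℝ) : ∑ i, sgnVec v i * v i = l1norm v :=
  Finset.sum_congr rfl fun i _ => sign_mul_self_eq_abs (v i)

theorem stmt9_general {N₁ N₂ m : ℕ} (k : ℕ)
    (A : Matrix (Fin N₁) (Fin N₂) ℝ →ₗ[ℝ] (Fin m → ℝ))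
    (Astar : (Fin m → ℝ) →ₗ[ℝ] Matrix (Fin N₁) (Fin N₂) ℝ)
    (hadj : ∀ (u : Fin m → ℝ) (Z : Matrix (Fin N₁) (Fin N₂) ℝ),
      frobInner (Astar u) Z = ∑ i, u i * A Z i)
    (Z : Matrix (Fin N₁) (Fin N₂) ℝ) (hZ : Z.rank ≤ k)
    (H : Matrix (Fin N₁) (Fin N₂) ℝ) (hH : IsBestRankApprox k (Astar (sgnVec (A Z))) H) :
    l1norm (A Z) ≤ frobNorm H * frobNorm Z :=
  calc l1norm (A Z) = frobInner (Astar (sgnVec (A Z))) Z := by rw [hadj, sum_sgnVec_mul_self]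
    _ ≤ frobNorm H * frobNorm Z := hH.frobInner_le_frobNorm_mul_frobNorm hZ

/-- If α‖Z‖_F ≤ ‖𝓐(Z)‖₁ for all Z of rank ≤ k, Z is a nonzero matrix of rank ≤ k, and H is a
best rank-k approximation of 𝓐*(sgn(𝓐(Z))), then ‖H‖_F ≥ α. -/
theorem stmt9 {N₁ N₂ m : ℕ} (k : ℕ) (hk : 0 < k) (hkdim : k ≤ min N₁ N₂)
    (A : Matrix (Fin N₁) (Fin N₂) ℝ →ₗ[ℝ] (Fin m → ℝ))
    (Astar : (Fin m → ℝ) →ₗ[ℝ] Matrix (Fin N₁) (Fin N₂) ℝ)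
    (hadj : ∀ (u : Fin m → ℝ) (Z : Matrix (Fin N₁) (Fin N₂) ℝ),
      frobInner (Astar u) Z = ∑ i, u i * A Z i)
    (α : ℝ) (hα : 0 < α)
    (hlow : ∀ Z : Matrix (Fin N₁) (Fin N₂) ℝ, Z.rank ≤ k → α * frobNorm Z ≤ l1norm (A Z))
    (Z : Matrix (Fin N₁) (Fin N₂) ℝ) (hZ0 : Z ≠ 0) (hZ : Z.rank ≤ k)
    (H : Matrix (Fin N₁) (Fin N₂) ℝ) (hH : IsBestRankApprox k (Astar (sgnVec (A Z))) H) :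
    α ≤ frobNorm H := by
  exact le_of_mul_le_mul_right
    ((hlow Z hZ).trans (stmt9_general k A Astar hadj Z hZ H hH)) (frobNorm_pos hZ0)
end

section
/- Let r, s, t be positive integers with r ≤ s, s + r ≤ t, and t + s + r ≤ min{N₁, N₂}. Suppose the linear map 𝓐 : ℝ^{N₁×N₂} → ℝ^m satisfies the modified rank-restricted isometry property of order t + s + r with constants 0 < α ≤ β, and let γ ≥ 1 satisfy β/α ≤ γ. Let X ∈ ℝ^{N₁×N₂} with rank(X) ≤ r, let e' ∈ ℝ^m, and let y := 𝓐(X) + e'. Let X_n ∈ ℝ^{N₁×N₂} with rank(X_n) ≤ s, and let W be a best rank-t approximation of 𝓐*(sgn(y − 𝓐(X_n))). If ‖𝓐(W)‖₁ ≥ 2γ·‖W‖_F², then ‖X − X_n‖_F ≤ (4γ/β)·‖e'‖₁. -/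
/- For the residual `A D + e` with `D = X - Xn`, pairing its sign vector with `A D` recovers
`‖A D‖₁` up to `2‖e‖₁`, so the adjoint image `G` of that sign vector satisfies
`α‖D‖_F - 2‖e‖₁ ≤ ⟨G, D⟩_F`. Matrices of bounded rank form a cone, and a nearest point `W` of a
cone to `G` satisfies `⟨G, D⟩_F ≤ ‖W‖_F ‖D‖_F` for every `D` in the cone. The stopping condition,
together with the upper isometry bound at `W`, forces `‖W‖_F ≤ α / 2`, and the term `(α / 2)‖D‖_F`
is absorbed on the left. -/

section MatrixRank

variable {m n : Type*} [Fintype n]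

lemma matrix_rank_smul_le {R : Type*} [CommSemiring R] [StrongRankCondition R] (c : R)
    (Z : Matrix m n R) : (c • Z).rank ≤ Z.rank := by
  classical
  simpa only [Matrix.mul_smul, Matrix.mul_one] using
    Matrix.rank_mul_le_left Z (c • (1 : Matrix n n R))

lemma matrix_rank_sub_le {K : Type*} [Field K] (Y Z : Matrix m n K) :
    (Y - Z).rank ≤ Y.rank + Z.rank := by
  have hrange : (Y - Z).mulVecLin.range ≤ Y.mulVecLin.range ⊔ Z.mulVecLin.range := by
    rintro _ ⟨v, rfl⟩
    rw [Matrix.mulVecLin_apply, Matrix.sub_mulVec]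
    exact Submodule.sub_mem _ (Submodule.mem_sup_left ⟨v, rfl⟩) (Submodule.mem_sup_right ⟨v, rfl⟩)
  exact (Submodule.finrank_mono hrange).trans
    (Submodule.finrank_add_le_finrank_add_finrank _ _)

end MatrixRank

section NearestOnLine

open scoped RealInnerProductSpace

variable {E : Type*} [SeminormedAddCommGroup E] [InnerProductSpace ℝ E] {z w x : E}

lemma inner_sq_le_of_forall_norm_sub_le (h : ∀ c : ℝ, ‖z - w‖ ≤ ‖z - c • x‖) :
    ⟪z, x⟫ ^ 2 ≤ ‖x‖ ^ 2 * (2 * ⟪z, w⟫ - ‖w‖ ^ 2) := by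
  have hquadratic (c : ℝ) :
      0 ≤ ‖x‖ ^ 2 * (c * c) + (-2 * ⟪z, x⟫) * c + (2 * ⟪z, w⟫ - ‖w‖ ^ 2) := by
    have hsq : ‖z - w‖ ^ 2 ≤ ‖z - c • x‖ ^ 2 := by gcongr; exact h c
    rw [norm_sub_sq_real, norm_sub_sq_real, real_inner_smul_right, norm_smul, mul_pow,
      Real.norm_eq_abs, sq_abs] at hsq
    linarith
  have hdiscrim := discrim_le_zero hquadratic
  rw [discrim] at hdiscrim
  linarith

lemma inner_eq_norm_sq_of_forall_norm_sub_le (h : ∀ c : ℝ, ‖z - w‖ ≤ ‖z - c • w‖) :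
    ⟪z, w⟫ = ‖w‖ ^ 2 := by
  have hsq : (⟪z, w⟫ - ‖w‖ ^ 2) ^ 2 ≤ 0 := by
    linarith [inner_sq_le_of_forall_norm_sub_le h]
  exact sub_eq_zero.mp (pow_eq_zero_iff two_ne_zero |>.mp (hsq.antisymm (sq_nonneg _)))

lemma abs_inner_le_of_forall_norm_sub_le (hw : ∀ c : ℝ, ‖z - w‖ ≤ ‖z - c • w‖)
    (hx : ∀ c : ℝ, ‖z - w‖ ≤ ‖z - c • x‖) : |⟪z, x⟫| ≤ ‖w‖ * ‖x‖ := by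
  refine abs_le_of_sq_le_sq ?_ (by positivity)
  calc ⟪z, x⟫ ^ 2 ≤ ‖x‖ ^ 2 * (2 * ⟪z, w⟫ - ‖w‖ ^ 2) := inner_sq_le_of_forall_norm_sub_le hx
    _ = (‖w‖ * ‖x‖) ^ 2 := by rw [inner_eq_norm_sq_of_forall_norm_sub_le hw]; ring

end NearestOnLine

section BestRankApprox

/-- The vector of entries of a matrix, through which the explicit sums `frobNorm` and `frobInner`
become the norm and inner product of a Euclidean space. -/
def entriesVec {m n : Type*} : Matrix m n ℝ →ₗ[ℝ] EuclideanSpace ℝ (m × n) where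
  toFun Z := WithLp.toLp 2 fun p => Z p.1 p.2
  map_add' _ _ := rfl
  map_smul' _ _ := rfl

lemma entriesVec_apply {m n : Type*} (Z : Matrix m n ℝ) (p : m × n) :
    entriesVec Z p = Z p.1 p.2 :=
  rfl

variable {N₁ N₂ : ℕ}

lemma norm_entriesVec (Z : Matrix (Fin N₁) (Fin N₂) ℝ) : ‖entriesVec Z‖ = frobNorm Z := by
  simp only [EuclideanSpace.norm_eq, Fintype.sum_prod_type, Real.norm_eq_abs, sq_abs, frobNorm,
    entriesVec_apply]

lemma inner_entriesVec (Y Z : Matrix (Fin N₁) (Fin N₂) ℝ) :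
    inner ℝ (entriesVec Y) (entriesVec Z) = frobInner Y Z := by
  simp only [PiLp.inner_apply, Fintype.sum_prod_type, RCLike.inner_apply, conj_trivial,
    mul_comm, frobInner, entriesVec_apply]

lemma frobNorm_nonneg (Z : Matrix (Fin N₁) (Fin N₂) ℝ) : 0 ≤ frobNorm Z :=
  Real.sqrt_nonneg _

lemma IsBestRankApprox.abs_frobInner_le {k : ℕ} {Z H D : Matrix (Fin N₁) (Fin N₂) ℝ}
    (hH : IsBestRankApprox k Z H) (hD : D.rank ≤ k) :
    |frobInner Z D| ≤ frobNorm H * frobNorm D := by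
  have hnearest (Y : Matrix (Fin N₁) (Fin N₂) ℝ) (hY : Y.rank ≤ k) (c : ℝ) :
      ‖entriesVec Z - entriesVec H‖ ≤ ‖entriesVec Z - c • entriesVec Y‖ := by
    rw [← map_smul, ← map_sub, ← map_sub, norm_entriesVec, norm_entriesVec]
    exact hH.2 _ ((matrix_rank_smul_le c Y).trans hY)
  rw [← inner_entriesVec, ← norm_entriesVec, ← norm_entriesVec]
  exact abs_inner_le_of_forall_norm_sub_le (hnearest H hH.1) (hnearest D hD)

end BestRankApprox

lemma l1norm_nonneg {m : ℕ} (v : Fin m → ℝ) : 0 ≤ l1norm v :=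
  Finset.sum_nonneg fun _ _ => abs_nonneg _

lemma abs_sub_two_mul_abs_le_sign_add_mul (a e : ℝ) :
    |a| - 2 * |e| ≤ Real.sign (a + e) * a := by
  rcases lt_trichotomy (a + e) 0 with hneg | hzero | hpos
  · rw [Real.sign_of_neg hneg]
    grind
  · rw [hzero, Real.sign_zero]
    grind
  · rw [Real.sign_of_pos hpos]
    grind

lemma l1norm_sub_two_mul_l1norm_le_sum_sgnVec_add_mul {m : ℕ} (a e : Fin m → ℝ) :
    l1norm a - 2 * l1norm e ≤ ∑ i, sgnVec (a + e) i * a i := by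
  rw [l1norm, l1norm, Finset.mul_sum, ← Finset.sum_sub_distrib]
  exact Finset.sum_le_sum fun i _ => abs_sub_two_mul_abs_le_sign_add_mul (a i) (e i)

/-- The modified rank-restricted isometry property of order `k` with constants `0 < α ≤ β`,
which compares `‖A Z‖₁` with `‖Z‖_F` for all matrices `Z` of rank at most `k`. -/
structure HasRankRIP {N₁ N₂ m : ℕ} (A : Matrix (Fin N₁) (Fin N₂) ℝ →ₗ[ℝ] (Fin m → ℝ))
    (k : ℕ) (α β : ℝ) : Prop where
  pos : 0 < α
  le : α ≤ β
  bounds : ∀ Z : Matrix (Fin N₁) (Fin N₂) ℝ, Z.rank ≤ k →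
    α * frobNorm Z ≤ l1norm (A Z) ∧ l1norm (A Z) ≤ β * frobNorm Z

section RankRIP

variable {N₁ N₂ m k : ℕ} {A : Matrix (Fin N₁) (Fin N₂) ℝ →ₗ[ℝ] (Fin m → ℝ)} {α β : ℝ}

lemma HasRankRIP.two_mul_frobNorm_le (hA : HasRankRIP A k α β)
    {W : Matrix (Fin N₁) (Fin N₂) ℝ} (hrank : W.rank ≤ k)
    (hW : 2 * (β / α) * frobNorm W ^ 2 ≤ l1norm (A W)) : 2 * frobNorm W ≤ α := by
  have hα := hA.pos
  have hβ : 0 < β := hα.trans_le hA.le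
  rcases (frobNorm_nonneg W).eq_or_lt with hzero | hpos
  · linarith
  · have hprod : (β / α * frobNorm W) * (2 * frobNorm W) ≤ (β / α * frobNorm W) * α :=
      calc (β / α * frobNorm W) * (2 * frobNorm W) = 2 * (β / α) * frobNorm W ^ 2 := by ring
        _ ≤ β * frobNorm W := hW.trans (hA.bounds W hrank).2
        _ = (β / α * frobNorm W) * α := by field_simp
    exact le_of_mul_le_mul_left hprod (by positivity)

theorem stmt11_general {Astar : (Fin m → ℝ) →ₗ[ℝ] Matrix (Fin N₁) (Fin N₂) ℝ}
    (hadj : ∀ (u : Fin m → ℝ) (Z : Matrix (Fin N₁) (Fin N₂) ℝ),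
      frobInner (Astar u) Z = ∑ i, u i * A Z i)
    (hA : HasRankRIP A k α β) {X Xn : Matrix (Fin N₁) (Fin N₂) ℝ} (hrank : (X - Xn).rank ≤ k)
    {e' y : Fin m → ℝ} (hy : y = A X + e') {W : Matrix (Fin N₁) (Fin N₂) ℝ}
    (hW : IsBestRankApprox k (Astar (sgnVec (y - A Xn))) W)
    (hcond : 2 * (β / α) * frobNorm W ^ 2 ≤ l1norm (A W)) :
    frobNorm (X - Xn) ≤ 4 / α * l1norm e' := by
  have hresidual : y - A Xn = A (X - Xn) + e' := by rw [hy, map_sub]; abel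
  have hlower : α * frobNorm (X - Xn) - 2 * l1norm e' ≤
      frobInner (Astar (sgnVec (y - A Xn))) (X - Xn) := by
    rw [hadj, hresidual]
    linarith [(hA.bounds _ hrank).1,
      l1norm_sub_two_mul_l1norm_le_sum_sgnVec_add_mul (A (X - Xn)) e']
  have hupper : 2 * frobInner (Astar (sgnVec (y - A Xn))) (X - Xn) ≤ α * frobNorm (X - Xn) :=
    calc 2 * frobInner (Astar (sgnVec (y - A Xn))) (X - Xn)
        ≤ 2 * (frobNorm W * frobNorm (X - Xn)) := by
          gcongr
          exact le_of_abs_le (hW.abs_frobInner_le hrank)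
      _ = (2 * frobNorm W) * frobNorm (X - Xn) := by ring
      _ ≤ α * frobNorm (X - Xn) :=
          mul_le_mul_of_nonneg_right (hA.two_mul_frobNorm_le hW.1 hcond) (frobNorm_nonneg _)
  rw [div_mul_eq_mul_div, le_div_iff₀' hA.pos]
  linarith

end RankRIP

/-- Stopping criterion: under the modified RIP of order t+s+r with ratio ≤ γ, if
rank(X) ≤ r, y = 𝓐(X) + e', rank(Xₙ) ≤ s, W is a best rank-t approximation of
𝓐*(sgn(y − 𝓐(Xₙ))), and ‖𝓐(W)‖₁ ≥ 2γ‖W‖_F², then ‖X − Xₙ‖_F ≤ (4γ/β)‖e'‖₁. -/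
theorem stmt11 {N₁ N₂ m : ℕ} (r s t : ℕ) (hr : 0 < r) (hs : 0 < s) (ht : 0 < t)
    (hrs : r ≤ s) (hst : s + r ≤ t) (hdim : t + s + r ≤ min N₁ N₂)
    (A : Matrix (Fin N₁) (Fin N₂) ℝ →ₗ[ℝ] (Fin m → ℝ))
    (Astar : (Fin m → ℝ) →ₗ[ℝ] Matrix (Fin N₁) (Fin N₂) ℝ)
    (hadj : ∀ (u : Fin m → ℝ) (Z : Matrix (Fin N₁) (Fin N₂) ℝ),
      frobInner (Astar u) Z = ∑ i, u i * A Z i)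
    (α β : ℝ) (hα : 0 < α) (hαβ : α ≤ β)
    (hRIP : ∀ Z : Matrix (Fin N₁) (Fin N₂) ℝ, Z.rank ≤ t + s + r →
      α * frobNorm Z ≤ l1norm (A Z) ∧ l1norm (A Z) ≤ β * frobNorm Z)
    (γ : ℝ) (hγ : 1 ≤ γ) (hratio : β / α ≤ γ)
    (X : Matrix (Fin N₁) (Fin N₂) ℝ) (hX : X.rank ≤ r)
    (e' : Fin m → ℝ) (y : Fin m → ℝ) (hy : y = A X + e')
    (Xn : Matrix (Fin N₁) (Fin N₂) ℝ) (hXn : Xn.rank ≤ s)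
    (W : Matrix (Fin N₁) (Fin N₂) ℝ)
    (hW : IsBestRankApprox t (Astar (sgnVec (y - A Xn))) W)
    (hcond : 2 * γ * frobNorm W ^ 2 ≤ l1norm (A W)) :
    frobNorm (X - Xn) ≤ (4 * γ / β) * l1norm e' := by
  have hrank : (X - Xn).rank ≤ t := (matrix_rank_sub_le X Xn).trans (by omega)
  have hA : HasRankRIP A t α β := ⟨hα, hαβ, fun Z hZ => hRIP Z (by omega)⟩
  have hβ : 0 < β := hα.trans_le hαβ
  calc frobNorm (X - Xn) ≤ 4 / α * l1norm e' :=
        stmt11_general hadj hA hrank hy hW (le_trans (by gcongr) hcond)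
    _ = 4 * (β / α) / β * l1norm e' := by field_simp
    _ ≤ 4 * γ / β * l1norm e' := by gcongr; exact l1norm_nonneg e'
end
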